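/- arXiv:quant-ph/0211019 — 7 statements merged into one kernel-verified Lean document; each statement's English description precedes it below -/
import Mathlib

section
/- Let n and l be natural numbers and let b : Fin n → (Fin l → ZMod 2) be a family of n vectors in the l-dimensional vector space GF(2)^l. Suppose that for every finite subset C of Fin n with |C| ≡ 2 (mod 4), the sum Σ_{i∈C} b i is not the zero vector. Then (l : ℝ) ≥ Real.sqrt n − 2. -/
/-!
The bound follows from the stronger linear estimate `n ≤ 2 * (l + 1)`.

The vectors `x ∈ GF(2)^n` of even weight with `∑ i, x i • b i = 0` form a subspace `W` of dimension
at least `n - (l + 1)`. By hypothesis no weight in `W` is `2` modulo `4`, so `W` is a doubly even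
code. From `|S ∆ T| + 2 |S ∩ T| = |S| + |T|` any two supports in `W` meet in an even number of
points, hence `W` is self-orthogonal for the dot product (`doublyEven_dotProduct_eq_zero`), and so
`2 * dim W ≤ n` (`two_mul_finrank_le_of_selfOrthogonal`). Finally `√n ≤ n / 2 + 1`.
-/

/-- The support of a binary vector; its cardinality is the weight. -/
def binarySupport {n : ℕ} (x : Fin n → ZMod 2) : Finset (Fin n) :=
  Finset.univ.filter fun i => x i = 1

lemma sum_smul_eq_sum_binarySupport {n : ℕ} {M : Type*} [AddCommGroup M] [Module (ZMod 2) M]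
    (x : Fin n → ZMod 2) (v : Fin n → M) :
    ∑ i, x i • v i = ∑ i ∈ binarySupport x, v i := by
  rw [binarySupport, Finset.sum_filter]
  refine Finset.sum_congr rfl fun i _ => ?_
  have key : ∀ a : ZMod 2, a = 0 ∨ a = 1 := by decide
  rcases key (x i) with h | h <;> simp [h]

lemma sum_eq_card_binarySupport {n : ℕ} (x : Fin n → ZMod 2) :
    ∑ i, x i = ((binarySupport x).card : ZMod 2) := by
  simpa using sum_smul_eq_sum_binarySupport x (fun _ => (1 : ZMod 2))

lemma card_binarySupport_add {n : ℕ} (x y : Fin n → ZMod 2) :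
    (binarySupport (x + y)).card + 2 * (binarySupport (x * y)).card
      = (binarySupport x).card + (binarySupport y).card := by
  simp only [binarySupport, Finset.card_filter, Finset.mul_sum, ← Finset.sum_add_distrib]
  refine Finset.sum_congr rfl fun i _ => ?_
  have key : ∀ a b : ZMod 2, (if a + b = 1 then 1 else 0) + 2 * (if a * b = 1 then 1 else 0)
      = (if a = 1 then 1 else 0) + (if b = 1 then 1 else 0) := by decide
  exact key (x i) (y i)

/-- A doubly even binary code is self-orthogonal. -/
lemma doublyEven_dotProduct_eq_zero {n : ℕ} (W : Submodule (ZMod 2) (Fin n → ZMod 2))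
    (hW : ∀ x ∈ W, 4 ∣ (binarySupport x).card) {x y : Fin n → ZMod 2} (hx : x ∈ W) (hy : y ∈ W) :
    x ⬝ᵥ y = 0 := by
  have h1 := card_binarySupport_add x y
  have h2 := hW x hx
  have h3 := hW y hy
  have h4 := hW _ (W.add_mem hx hy)
  have h5 : 2 ∣ (binarySupport (x * y)).card := by omega
  have h6 := sum_eq_card_binarySupport (x * y)
  rw [(ZMod.natCast_eq_zero_iff _ _).2 h5] at h6
  exact h6

/-- The dot product embeds a self-orthogonal subspace into its own dual annihilator, so it has at
most half the dimension of the ambient space. -/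
lemma two_mul_finrank_le_of_selfOrthogonal {n : ℕ} (W : Submodule (ZMod 2) (Fin n → ZMod 2))
    (hW : ∀ x ∈ W, ∀ y ∈ W, x ⬝ᵥ y = 0) : 2 * Module.finrank (ZMod 2) W ≤ n := by
  have hle : W.map (dotProductEquiv (ZMod 2) (Fin n)).toLinearMap ≤ W.dualAnnihilator := by
    rintro _ ⟨x, hx, rfl⟩
    rw [Submodule.mem_dualAnnihilator]
    intro y hy
    exact hW x hx y hy
  have h1 := Submodule.finrank_mono hle
  rw [LinearEquiv.finrank_map_eq] at h1
  have h2 := Subspace.finrank_add_finrank_dualAnnihilator_eq W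
  rw [Module.finrank_fin_fun] at h2
  omega

theorem ghz_game_vector_bound (n l : ℕ) (b : Fin n → Fin l → ZMod 2)
    (h : ∀ C : Finset (Fin n), C.card % 4 = 2 → ∑ i ∈ C, b i ≠ 0) :
    (l : ℝ) ≥ Real.sqrt n - 2 := by
  -- The kernel of `f` is the even-weight part of the space of linear relations among the `b i`.
  let f : (Fin n → ZMod 2) →ₗ[ZMod 2] (Fin l → ZMod 2) × ZMod 2 :=
    (Fintype.linearCombination (ZMod 2) b).prod
      (Fintype.linearCombination (ZMod 2) fun _ => (1 : ZMod 2))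
  have hker : ∀ x ∈ LinearMap.ker f, 4 ∣ (binarySupport x).card := by
    intro x hx
    have hx' : ∑ i, x i • b i = 0 ∧ ∑ i, x i • (1 : ZMod 2) = 0 := Prod.ext_iff.1 hx
    obtain ⟨h1, h2⟩ := hx'
    rw [sum_smul_eq_sum_binarySupport] at h1
    simp only [smul_eq_mul, mul_one] at h2
    rw [sum_eq_card_binarySupport, ZMod.natCast_eq_zero_iff] at h2
    have h3 : (binarySupport x).card % 4 ≠ 2 := fun hc => h _ hc h1
    omega
  have hdim := two_mul_finrank_le_of_selfOrthogonal (LinearMap.ker f)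
    fun x hx y hy => doublyEven_dotProduct_eq_zero _ hker hx hy
  have hrn := f.finrank_range_add_finrank_ker
  have hrange := Submodule.finrank_le (LinearMap.range f)
  rw [Module.finrank_prod, Module.finrank_fin_fun, Module.finrank_self] at hrange
  rw [Module.finrank_fin_fun] at hrn
  have hn : n ≤ 2 * (l + 1) := by omega
  have hnR : (n : ℝ) ≤ 2 * (l + 1) := by exact_mod_cast hn
  nlinarith [Real.sq_sqrt (Nat.cast_nonneg (α := ℝ) n), sq_nonneg (Real.sqrt n - 1)]
end

section
/- Let n and l be natural numbers and let b : Fin n → (Fin l → ZMod 2) be a family of vectors in GF(2)^l such that for every finite subset C of Fin n with |C| ≡ 2 (mod 4), the sum Σ_{i∈C} b i is nonzero. Define w : Fin n → (Fin (l+1) → ZMod 2) by prepending the constant bit 1 to each vector, i.e. w i = Fin.cons 1 (b i). Then for every finite subset I of Fin n, if Σ_{i∈I} w i = 0 then |I| ≡ 0 (mod 4). -/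
theorem prepend_one_sum_zero_card_mod_four (n l : ℕ) (b : Fin n → Fin l → ZMod 2)
    (h : ∀ C : Finset (Fin n), C.card % 4 = 2 → ∑ i ∈ C, b i ≠ 0)
    (w : Fin n → Fin (l + 1) → ZMod 2)
    (hw : ∀ i, w i = Fin.cons 1 (b i)) :
    ∀ I : Finset (Fin n), ∑ i ∈ I, w i = 0 → I.card % 4 = 0 := by
  intro I hI
  -- The prepended coordinate of the sum is the parity of `I.card`.
  have h_even : ((I.card : ℕ) : ZMod 2) = 0 := by
    simpa [Finset.sum_apply, hw] using congrFun hI 0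
  have h_dvd : 2 ∣ I.card := (ZMod.natCast_eq_zero_iff _ _).mp h_even
  -- The remaining coordinates give the sum of the `b i`, so `h` excludes residue 2.
  have h_sum : ∑ i ∈ I, b i = 0 := by
    funext j
    simpa [Finset.sum_apply, hw] using congrFun hI j.succ
  have h_ne : I.card % 4 ≠ 2 := fun hc => h I hc h_sum
  omega
end

section
/- Let V be a vector space over ZMod 2, ι an index type, and w : ι → V. Let A be a finite subset of ι such that Σ_{i∈A} w i = 0 and for every nonempty proper subset B ⊊ A one has Σ_{i∈B} w i ≠ 0. Then for every proper subset S ⊊ A, the family (w i)_{i∈S} is linearly independent over ZMod 2. -/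
/-!
Over GF(2) a linear combination equals the subset sum over the support of its coefficients.
A nontrivial vanishing combination of the `w i`, `i ∈ S`, would therefore give a nonempty subset
of `S`, hence a nonempty proper subset of `A`, with zero sum, contradicting minimality.
-/

theorem minimal_zero_sum_set_proper_subset_linearIndependent
    (V : Type*) [AddCommGroup V] [Module (ZMod 2) V]
    (ι : Type*) (w : ι → V) (A : Finset ι)
    (hA : ∑ i ∈ A, w i = 0)
    (hmin : ∀ B : Finset ι, B ⊂ A → B.Nonempty → ∑ i ∈ B, w i ≠ 0) :
    ∀ S : Finset ι, S ⊂ A →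
      LinearIndependent (ZMod 2) (fun i : S => w i) := by
  classical
  intro S hS
  rw [linearIndependent_iff']
  intro s g hg i hi
  by_contra hne
  refine hmin ((s.filter fun j => g j ≠ 0).map (Function.Embedding.subtype _)) ?_ ?_ ?_
  · refine lt_of_le_of_lt (fun x hx => ?_) hS
    obtain ⟨y, -, rfl⟩ := Finset.mem_map.mp hx
    exact y.2
  · exact ⟨i, Finset.mem_map.mpr ⟨i, Finset.mem_filter.mpr ⟨hi, hne⟩, rfl⟩⟩
  · rw [Finset.sum_map, Finset.sum_filter]
    refine (Finset.sum_congr rfl fun j _ => ?_).trans hg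
    have h2 : ∀ a : ZMod 2, a = 0 ∨ a = 1 := by decide
    rcases h2 (g j) with h | h <;> simp [h]
end

section
/- Let V be a vector space over ZMod 2, n a natural number, and w : Fin n → V. Then there exists a finite collection 𝒜 of pairwise disjoint nonempty finite subsets of Fin n with the following property: letting Ā be the complement in Fin n of the union of the members of 𝒜, for every nonempty finite subset B of Fin n that is contained in some member of 𝒜 ∪ {Ā}, one has Σ_{i∈B} w i = 0 if and only if B ∈ 𝒜. -/
/-!
Call a nonempty index set with zero sum *minimal* if no proper nonempty subset has zero sum. Take
`𝒜` maximal under inclusion among the families of pairwise disjoint minimal zero-sum sets. A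
zero-sum subset of a member of `𝒜` equals that member by minimality. A nonempty zero-sum subset of
the leftover set would contain a minimal one, disjoint from all members of `𝒜`, which could be
added to `𝒜`, contradicting maximality. Characteristic two plays no role.
-/

theorem exists_family_minimal_zero_sum_sets
    (V : Type*) [AddCommGroup V] [Module (ZMod 2) V]
    (n : ℕ) (w : Fin n → V) :
    ∃ 𝒜 : Finset (Finset (Fin n)),
      (∀ A ∈ 𝒜, A.Nonempty) ∧
      (∀ A ∈ 𝒜, ∀ A' ∈ 𝒜, A ≠ A' → Disjoint A A') ∧
      (∀ B : Finset (Fin n), B.Nonempty →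
        ((∃ A ∈ 𝒜, B ⊆ A) ∨ B ⊆ Finset.univ \ 𝒜.sup id) →
        (∑ i ∈ B, w i = 0 ↔ B ∈ 𝒜)) := by
  let Z : Finset (Fin n) → Prop := fun B => B.Nonempty ∧ ∑ i ∈ B, w i = 0
  let P : Finset (Finset (Fin n)) → Prop := fun 𝒜 =>
    (∀ A ∈ 𝒜, Minimal Z A) ∧ ∀ A ∈ 𝒜, ∀ A' ∈ 𝒜, A ≠ A' → Disjoint A A'
  have hP : P ∅ := by simp [P]
  obtain ⟨𝒜, -, h𝒜⟩ := exists_maximal_ge_of_wellFoundedGT P ∅ hP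
  obtain ⟨hmin, hdisj⟩ := h𝒜.prop
  refine ⟨𝒜, fun A hA => (hmin A hA).prop.1, hdisj, fun B hB hsub =>
    ⟨fun hsum => ?_, fun hmem => (hmin B hmem).prop.2⟩⟩
  rcases hsub with ⟨A, hA, hBA⟩ | hB'
  · rwa [(hmin A hA).eq_of_le ⟨hB, hsum⟩ hBA]
  · exfalso
    obtain ⟨M, hMB, hM⟩ := exists_minimal_le_of_wellFoundedLT Z B ⟨hB, hsum⟩
    have hMdisj : ∀ A ∈ 𝒜, Disjoint M A := fun A hA =>
      (Finset.disjoint_sdiff.symm.mono_left (hMB.trans hB')).mono_right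
        (Finset.le_sup (f := id) hA)
    have hins : P (insert M 𝒜) := by
      refine ⟨fun A hA => ?_, fun A hA A' hA' hne => ?_⟩
      · rcases Finset.mem_insert.1 hA with rfl | hA
        exacts [hM, hmin A hA]
      · rcases Finset.mem_insert.1 hA with rfl | hA₁ <;>
          rcases Finset.mem_insert.1 hA' with rfl | hA₂
        exacts [absurd rfl hne, hMdisj _ hA₂, (hMdisj _ hA₁).symm, hdisj _ hA₁ _ hA₂ hne]
    have hM𝒜 : M ∈ 𝒜 :=
      h𝒜.le_of_ge hins (Finset.subset_insert M 𝒜) (Finset.mem_insert_self M 𝒜)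
    exact hM.prop.1.ne_empty (disjoint_self.1 (hMdisj M hM𝒜))
end

section
/- Let n ≥ 1, let k ≤ n, and let b : Fin n → Fin 2. Then the inner product of the n-partite GHZ state with the product vector v_{k,b} equals ⟨Φₙ, v_{k,b}⟩ = 2^{−(n+1)/2} · (1 + i^k · (−1)^{Σ_{i} b i}), where Σ_i b i is the sum over all i : Fin n of the values b i (as natural numbers) and i is the imaginary unit. -/
/-!
The GHZ state is supported on the two constant bit strings, so the inner product is
`1/√2` times the sum of the values of `v_{k,b}` at the all-zero and all-one strings. Every
tensor factor is `1/√2` at `0`; at `1` it carries the extra phase `(-1)^(b i)`, and also a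
factor `i` on each of the first `k` coordinates. Hence the two values are `(1/√2)^n`
(`prodVec_zero`) and `(1/√2)^n · i^k · (-1)^(Σ b i)` (`prodVec_one`).
-/

/-- The `n`-partite GHZ state as a vector in `(Fin n → Fin 2) → ℂ`. -/
noncomputable def ghz (n : ℕ) : (Fin n → Fin 2) → ℂ := fun s =>
  if (∀ i, s i = 0) ∨ (∀ i, s i = 1) then (1 / Real.sqrt 2 : ℝ) else 0

/-- Diagonal basis vectors of a single qubit. -/
noncomputable def fdiag : Fin 2 → Fin 2 → ℂ := fun b x =>
  if x = 0 then (1 / Real.sqrt 2 : ℝ) else ((-1 : ℂ) ^ (b : ℕ)) / (Real.sqrt 2 : ℝ)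

/-- Circular basis vectors of a single qubit. -/
noncomputable def gcirc : Fin 2 → Fin 2 → ℂ := fun b x =>
  if x = 0 then (1 / Real.sqrt 2 : ℝ)
  else ((-1 : ℂ) ^ (b : ℕ)) * Complex.I / (Real.sqrt 2 : ℝ)

/-- The product vector `v_{k,b}`: circular basis on the first `k` coordinates,
diagonal basis on the remaining ones. -/
noncomputable def prodVec (n k : ℕ) (b : Fin n → Fin 2) : (Fin n → Fin 2) → ℂ :=
  fun s => (∏ i ∈ Finset.univ.filter (fun i : Fin n => (i : ℕ) < k), gcirc (b i) (s i)) *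
    (∏ i ∈ Finset.univ.filter (fun i : Fin n => k ≤ (i : ℕ)), fdiag (b i) (s i))

/-- The inner product `⟨φ, ψ⟩ = Σ_s conj (φ s) * ψ s`. -/
noncomputable def qInner (n : ℕ) (φ ψ : (Fin n → Fin 2) → ℂ) : ℂ :=
  ∑ s : Fin n → Fin 2, (starRingEnd ℂ) (φ s) * ψ s

lemma prodVec_eq_prod_ite (n k : ℕ) (b s : Fin n → Fin 2) :
    prodVec n k b s =
      ∏ i : Fin n, if (i : ℕ) < k then gcirc (b i) (s i) else fdiag (b i) (s i) := by
  rw [Finset.prod_ite]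
  simp only [prodVec, not_lt]

lemma prodVec_zero (n k : ℕ) (b : Fin n → Fin 2) :
    prodVec n k b (fun _ => 0) = ((1 / Real.sqrt 2 : ℝ) : ℂ) ^ n := by
  rw [prodVec_eq_prod_ite]
  simp [gcirc, fdiag]

lemma prodVec_one (n k : ℕ) (hk : k ≤ n) (b : Fin n → Fin 2) :
    prodVec n k b (fun _ => 1) = ((1 / Real.sqrt 2 : ℝ) : ℂ) ^ n *
      (Complex.I ^ k * (-1 : ℂ) ^ (∑ i : Fin n, (b i : ℕ))) := by
  have hfactor : ∀ i : Fin n,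
      (if (i : ℕ) < k then gcirc (b i) 1 else fdiag (b i) 1) =
        ((1 / Real.sqrt 2 : ℝ) : ℂ) *
          ((if (i : ℕ) < k then Complex.I else 1) * (-1 : ℂ) ^ (b i : ℕ)) := by
    intro i
    split_ifs <;> simp [gcirc, fdiag] <;> ring
  have hI : (∏ i : Fin n, if (i : ℕ) < k then Complex.I else 1) = Complex.I ^ k := by
    rw [Finset.prod_ite]
    simp [Fin.card_filter_val_lt, hk]
  rw [prodVec_eq_prod_ite, Finset.prod_congr rfl fun i _ => hfactor i,
    Finset.prod_mul_distrib, Finset.prod_mul_distrib, hI, Finset.prod_pow_eq_pow_sum]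
  simp

lemma one_div_sqrt_two_pow (m : ℕ) :
    (1 / Real.sqrt 2) ^ m = (2 : ℝ) ^ (-((m : ℝ) / 2)) := by
  rw [Real.sqrt_eq_rpow, one_div, ← Real.rpow_neg (by norm_num), ← Real.rpow_natCast,
    ← Real.rpow_mul (by norm_num)]
  congr 1
  ring

theorem ghz_inner_prodVec (n k : ℕ) (hn : 1 ≤ n) (hk : k ≤ n) (b : Fin n → Fin 2) :
    qInner n (ghz n) (prodVec n k b) =
      (((2 : ℝ) ^ (-(((n : ℝ) + 1) / 2)) : ℝ) : ℂ) *
        (1 + Complex.I ^ k * (-1 : ℂ) ^ (∑ i : Fin n, (b i : ℕ))) := by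
  have hpos : 0 < n := hn
  -- The two constant strings are distinct because `0 < n`; for `n = 0` they would coincide.
  have hne : (fun _ => 0 : Fin n → Fin 2) ≠ fun _ => 1 := fun h => by
    simpa using congrFun h ⟨0, hpos⟩
  have hsupp : qInner n (ghz n) (prodVec n k b) =
      ∑ s ∈ ({fun _ => 0, fun _ => 1} : Finset (Fin n → Fin 2)),
        (starRingEnd ℂ) (ghz n s) * prodVec n k b s := by
    refine (Finset.sum_subset (Finset.subset_univ _) fun s _ hs => ?_).symm
    have hs' : ¬((∀ i, s i = 0) ∨ (∀ i, s i = 1)) := by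
      simpa [funext_iff] using hs
    simp only [ghz, if_neg hs', map_zero, zero_mul]
  have h0 : ghz n (fun _ => 0) = ((1 / Real.sqrt 2 : ℝ) : ℂ) := if_pos (Or.inl fun _ => rfl)
  have h1 : ghz n (fun _ => 1) = ((1 / Real.sqrt 2 : ℝ) : ℂ) := if_pos (Or.inr fun _ => rfl)
  have hpow := one_div_sqrt_two_pow (n + 1)
  push_cast at hpow
  rw [hsupp, Finset.sum_pair hne, h0, h1, prodVec_zero, prodVec_one n k hk, Complex.conj_ofReal,
    ← hpow, Complex.ofReal_pow]
  ring
end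

section
/- Let n ≥ 1 and k ≤ n. For each b : Fin n → Fin 2, define V_b = v_{0,b} (all-diagonal product vector) if Σ_{k ≤ i < n} b i is odd, and V_b = v_{k,b} (circular on the first k coordinates, diagonal on the rest) if Σ_{k ≤ i < n} b i is even. Then the family (V_b)_{b : Fin n → Fin 2} is an orthonormal basis of the 2^n-dimensional complex Hilbert space of functions (Fin n → Fin 2) → ℂ: the family is orthonormal and its span is the whole space. -/
/-- The strategy vector `V_b`: all-diagonal if the parity of the remaining players'
measurement outcomes is odd, else circular on the first `k` coordinates. -/
noncomputable def stratVec (n k : ℕ) (b : Fin n → Fin 2) : (Fin n → Fin 2) → ℂ :=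
  if Odd (∑ i ∈ Finset.univ.filter (fun i : Fin n => k ≤ (i : ℕ)), (b i : ℕ))
    then prodVec n 0 b else prodVec n k b

/-- The single-qubit basis: circular if `c` holds, diagonal otherwise. -/
noncomputable def qubitBasis (c : Prop) [Decidable c] (b x : Fin 2) : ℂ :=
  if c then gcirc b x else fdiag b x

lemma sqrt_two_mul_self : ((Real.sqrt 2 : ℝ) : ℂ) * (Real.sqrt 2 : ℝ) = 2 := by
  rw [← Complex.ofReal_mul, Real.mul_self_sqrt (by norm_num)]
  norm_num

lemma qubitBasis_orthonormal (c : Prop) [Decidable c] (b b' : Fin 2) :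
    ∑ x, (starRingEnd ℂ) (qubitBasis c b x) * qubitBasis c b' x = if b = b' then 1 else 0 := by
  have h2 := sqrt_two_mul_self
  have h0 : ((Real.sqrt 2 : ℝ) : ℂ) ≠ 0 := by
    intro h
    simp [h] at h2
  have hI := Complex.I_mul_I
  by_cases hc : c <;> fin_cases b <;> fin_cases b' <;>
    simp [qubitBasis, hc, gcirc, fdiag] <;> field_simp <;> grind

lemma prodVec_eq_prod (n k : ℕ) (b s : Fin n → Fin 2) :
    prodVec n k b s = ∏ i : Fin n, qubitBasis ((i : ℕ) < k) (b i) (s i) := by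
  simp only [prodVec, qubitBasis, Finset.prod_ite, not_lt]

lemma qInner_tensor (n : ℕ) (u w : Fin n → Fin 2 → ℂ) :
    qInner n (fun s => ∏ i, u i (s i)) (fun s => ∏ i, w i (s i)) =
      ∏ i, ∑ x, (starRingEnd ℂ) (u i x) * w i x := by
  simp only [qInner, map_prod, ← Finset.prod_mul_distrib]
  rw [Finset.prod_univ_sum, Fintype.piFinset_univ]

lemma qInner_prodVec (n k l : ℕ) (b b' : Fin n → Fin 2) :
    qInner n (prodVec n k b) (prodVec n l b') =
      ∏ i : Fin n, ∑ x, (starRingEnd ℂ) (qubitBasis ((i : ℕ) < k) (b i) x) *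
        qubitBasis ((i : ℕ) < l) (b' i) x := by
  rw [← qInner_tensor]
  congr 1 <;> funext s <;> exact prodVec_eq_prod _ _ _ _

lemma qInner_prodVec_same (n k : ℕ) (b b' : Fin n → Fin 2) :
    qInner n (prodVec n k b) (prodVec n k b') = if b = b' then 1 else 0 := by
  rw [qInner_prodVec]
  simp only [qubitBasis_orthonormal]
  rw [Finset.prod_ite_zero]
  simp [funext_iff]

/-- Product vectors with different numbers of circular coordinates are still orthogonal as soon
as their labels differ at a coordinate where both are diagonal. -/
lemma qInner_prodVec_eq_zero (n k l : ℕ) (b b' : Fin n → Fin 2) (i : Fin n)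
    (hk : k ≤ (i : ℕ)) (hl : l ≤ (i : ℕ)) (hi : b i ≠ b' i) :
    qInner n (prodVec n k b) (prodVec n l b') = 0 := by
  rw [qInner_prodVec]
  apply Finset.prod_eq_zero (Finset.mem_univ i)
  have h := qubitBasis_orthonormal False (b i) (b' i)
  simpa [qubitBasis, hi, not_lt.mpr hk, not_lt.mpr hl] using h

lemma stratVec_orthonormal (n k : ℕ) (b b' : Fin n → Fin 2) :
    qInner n (stratVec n k b) (stratVec n k b') = if b = b' then 1 else 0 := by
  -- labels with different tail parities differ at some coordinate `i ≥ k`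
  have key : ¬ (Odd (∑ i ∈ Finset.univ.filter (fun i : Fin n => k ≤ (i : ℕ)), (b i : ℕ)) ↔
      Odd (∑ i ∈ Finset.univ.filter (fun i : Fin n => k ≤ (i : ℕ)), (b' i : ℕ))) →
      ∃ i : Fin n, k ≤ (i : ℕ) ∧ b i ≠ b' i := by
    intro h
    by_contra! hall
    have hsum : ∑ i ∈ Finset.univ.filter (fun i : Fin n => k ≤ (i : ℕ)), (b i : ℕ) =
        ∑ i ∈ Finset.univ.filter (fun i : Fin n => k ≤ (i : ℕ)), (b' i : ℕ) :=
      Finset.sum_congr rfl fun i hi => congrArg Fin.val (hall i (Finset.mem_filter.mp hi).2)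
    exact h (by rw [hsum])
  unfold stratVec
  by_cases h : Odd (∑ i ∈ Finset.univ.filter (fun i : Fin n => k ≤ (i : ℕ)), (b i : ℕ)) <;>
    by_cases h' : Odd (∑ i ∈ Finset.univ.filter (fun i : Fin n => k ≤ (i : ℕ)), (b' i : ℕ))
  · rw [if_pos h, if_pos h', qInner_prodVec_same]
  · obtain ⟨i, hi, hne⟩ := key fun e => h' (e.mp h)
    rw [if_pos h, if_neg h', qInner_prodVec_eq_zero n 0 k b b' i (Nat.zero_le _) hi hne,
      if_neg fun e => hne (congrFun e i)]
  · obtain ⟨i, hi, hne⟩ := key fun e => h (e.mpr h')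
    rw [if_neg h, if_pos h', qInner_prodVec_eq_zero n k 0 b b' i hi (Nat.zero_le _) hne,
      if_neg fun e => hne (congrFun e i)]
  · rw [if_neg h, if_neg h', qInner_prodVec_same]

lemma stratVec_linearIndependent (n k : ℕ) : LinearIndependent ℂ (stratVec n k) := by
  rw [Fintype.linearIndependent_iff]
  intro c hc b
  -- pairing the relation with `V_b` isolates the coefficient `c b`
  have h : qInner n (stratVec n k b) (∑ b', c b' • stratVec n k b') =
      ∑ b', c b' * qInner n (stratVec n k b) (stratVec n k b') := by
    simp only [qInner, Finset.sum_apply, Pi.smul_apply, smul_eq_mul, Finset.mul_sum]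
    rw [Finset.sum_comm]
    exact Finset.sum_congr rfl fun _ _ => Finset.sum_congr rfl fun _ _ => by ring
  have h0 : qInner n (stratVec n k b) 0 = 0 := by simp [qInner]
  rw [hc, h0] at h
  simpa [stratVec_orthonormal] using h.symm

theorem stratVec_orthonormal_basis (n k : ℕ) (hn : 1 ≤ n) (hk : k ≤ n) :
    (∀ b b' : Fin n → Fin 2,
        qInner n (stratVec n k b) (stratVec n k b') = if b = b' then 1 else 0) ∧
      Submodule.span ℂ (Set.range (stratVec n k)) = ⊤ :=
  ⟨stratVec_orthonormal n k,
    (stratVec_linearIndependent n k).span_eq_top_of_card_eq_finrank' (by simp)⟩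
end

section
/- Let n ≥ 2. For every s : Fin n → Fin 2, the n-partite GHZ state satisfies Φₙ s = 2^{−(n−1)/2} · ( χ₀(s) · ∏_{2 ≤ i < n} (f 0 (s i) + f 1 (s i)) + χ₁(s) · ∏_{2 ≤ i < n} (f 0 (s i) − f 1 (s i)) ), where χ₀(s) = 1 if s 0 = 0 and s 1 = 0 and χ₀(s) = 0 otherwise, and χ₁(s) = 1 if s 0 = 1 and s 1 = 1 and χ₁(s) = 0 otherwise. (This is the expansion of the GHZ state in which the last n−2 subsystems are written in the diagonal basis.) -/
lemma sqrt_two_sq_complex : ((Real.sqrt 2 : ℝ) : ℂ) * ((Real.sqrt 2 : ℝ) : ℂ) = 2 := by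
  rw [← Complex.ofReal_mul, Real.mul_self_sqrt (by norm_num)]
  norm_num

lemma sqrt_two_complex_ne_zero : ((Real.sqrt 2 : ℝ) : ℂ) ≠ 0 := by
  simp

lemma fdiag_add (x : Fin 2) :
    fdiag 0 x + fdiag 1 x = if x = 0 then ((Real.sqrt 2 : ℝ) : ℂ) else 0 := by
  have h0 := sqrt_two_complex_ne_zero
  have h := sqrt_two_sq_complex
  fin_cases x
  · simp [fdiag]
    field_simp
    linear_combination -h
  · simp [fdiag]
    field_simp
    norm_num

lemma fdiag_sub (x : Fin 2) :
    fdiag 0 x - fdiag 1 x = if x = 1 then ((Real.sqrt 2 : ℝ) : ℂ) else 0 := by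
  have h0 := sqrt_two_complex_ne_zero
  have h := sqrt_two_sq_complex
  fin_cases x
  · simp [fdiag]
  · simp [fdiag]
    field_simp
    linear_combination -h

lemma card_sites (n : ℕ) :
    (Finset.univ.filter (fun i : Fin n => 2 ≤ (i : ℕ))).card = n - 2 := by
  have h : (Finset.univ.filter (fun i : Fin n => 2 ≤ (i : ℕ))).map Fin.valEmbedding =
      Finset.Ico 2 n := by
    ext k
    simp only [Finset.mem_map, Finset.mem_filter, Finset.mem_univ, true_and,
      Fin.valEmbedding_apply, Finset.mem_Ico]
    exact ⟨fun ⟨i, hi, hk⟩ => hk ▸ ⟨hi, i.2⟩, fun ⟨h2, hk⟩ => ⟨⟨k, hk⟩, h2, rfl⟩⟩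
  rw [← Finset.card_map, h, Nat.card_Ico]

lemma prod_sites_eq (n : ℕ) (s : Fin n → Fin 2) (a : Fin 2) (c : ℂ) :
    ∏ i ∈ Finset.univ.filter (fun i : Fin n => 2 ≤ (i : ℕ)), (if s i = a then c else 0) =
      if ∀ i : Fin n, 2 ≤ (i : ℕ) → s i = a then c ^ (n - 2) else 0 := by
  rw [Finset.prod_ite_zero, Finset.prod_const, card_sites]
  simp

lemma normalisation (n : ℕ) (hn : 2 ≤ n) :
    (((2 : ℝ) ^ (-(((n : ℝ) - 1) / 2)) : ℝ) : ℂ) * ((Real.sqrt 2 : ℝ) : ℂ) ^ (n - 2) =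
      ((1 / Real.sqrt 2 : ℝ) : ℂ) := by
  rw [← Complex.ofReal_pow, ← Complex.ofReal_mul]
  congr 1
  rw [Real.sqrt_eq_rpow, ← Real.rpow_natCast, ← Real.rpow_mul (by norm_num),
    ← Real.rpow_add (by norm_num), one_div (_ ^ _), ← Real.rpow_neg (by norm_num)]
  congr 1
  push_cast [Nat.cast_sub hn]
  ring

lemma forall_eq_iff (n : ℕ) (hn0 : 0 < n) (hn1 : 1 < n) (s : Fin n → Fin 2) (a : Fin 2) :
    (∀ i, s i = a) ↔ (s ⟨0, hn0⟩ = a ∧ s ⟨1, hn1⟩ = a) ∧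
      ∀ i : Fin n, 2 ≤ (i : ℕ) → s i = a := by
  refine ⟨fun h => ⟨⟨h _, h _⟩, fun i _ => h i⟩, ?_⟩
  rintro ⟨⟨h0, h1⟩, h⟩ ⟨i, hi⟩
  match i, hi with
  | 0, _ => exact h0
  | 1, _ => exact h1
  | k + 2, hi => exact h ⟨k + 2, hi⟩ (by simp)

theorem ghz_diagonal_expansion (n : ℕ) (hn : 2 ≤ n) (s : Fin n → Fin 2) :
    ghz n s =
      (((2 : ℝ) ^ (-(((n : ℝ) - 1) / 2)) : ℝ) : ℂ) *
        ((if s ⟨0, by omega⟩ = 0 ∧ s ⟨1, by omega⟩ = 0 then 1 else 0) *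
            ∏ i ∈ Finset.univ.filter (fun i : Fin n => 2 ≤ (i : ℕ)),
              (fdiag 0 (s i) + fdiag 1 (s i)) +
          (if s ⟨0, by omega⟩ = 1 ∧ s ⟨1, by omega⟩ = 1 then 1 else 0) *
            ∏ i ∈ Finset.univ.filter (fun i : Fin n => 2 ≤ (i : ℕ)),
              (fdiag 0 (s i) - fdiag 1 (s i))) := by
  simp only [fdiag_add, fdiag_sub, prod_sites_eq, ghz,
    forall_eq_iff n (by omega) (by omega), ← normalisation n hn]
  by_cases h0 : s ⟨0, by omega⟩ = 0 ∧ s ⟨1, by omega⟩ = 0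
  · simp [h0]
  · simp only [h0, false_and, false_or, if_false, zero_mul, zero_add]
    split_ifs <;> simp_all
end
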